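/- If g₀: ℝ³×ℝ³ → ℝ satisfies |g₀(y,u)| ≤ (1+|y|²)^{-n}(1+|u|)^{-γ} for some n, γ ≥ 0, then the solution of the damped kinetic Fokker-Planck equation satisfies |(G₁(t) * g₀)(x,v)| ≤ C(n,γ) e^{-t} (1+|x|²)^{-n}(1+|v|)^{-γ} for all t > 0, x, v ∈ ℝ³, where G₁ is the explicit kernel of ∂_t g + v·∇_x g - Lg + 2g = 0. -/

import Mathlib

/-!
In hyperbolic form, up to normalisation and the factor `e^{-2t}`, the kernel is `e^{-Φ}` with
`Φ = |x - y - tanh(t/2)(v + u)|² / (4t - 8 tanh(t/2)) + |v / cosh t - u|² / (4 tanh t)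
  + (tanh t / 4) |v|²`.
Because `tanh(t/2) < tanh t < 1` and `tanh(t/2) < t/2`, the phase controls the displacements:
`|v - u|² ≲ Φ` and `|x - y|² ≲ (1 + t) Φ`. Peetre's inequality then trades the weight at `(y, u)`
for the weight at `(x, v)` at the price of powers of `1 + t` and `1 + Φ`. These are absorbed by
half of the damping `e^{-2t}` and by half of the phase, and the remaining Gaussian `e^{-Φ/2}` has
normalised mass bounded uniformly in `t`.
-/

open MeasureTheory Real

noncomputable section

abbrev E3 := EuclideanSpace ℝ (Fin 3)

/-- `D(t) = ½( t(1 - e^{-2t}) - 2(1 - e^{-t})² )`. -/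
def Dfun (t : ℝ) : ℝ :=
  (t * (1 - Real.exp (-(2 * t))) - 2 * (1 - Real.exp (-t)) ^ 2) / 2

/-- The explicit Green's function `G₁(t,x,v;y,u)` of the damped kinetic
Fokker–Planck equation `∂_t g + v·∇_x g - Lg + 2g = 0`. -/
def G1ker (t : ℝ) (x v y u : E3) : ℝ :=
  (2 * Real.pi) ^ (-(6 : ℝ)) * (Real.pi / Real.sqrt (Dfun t)) ^ (3 : ℕ) *
    Real.exp
      (-((1 - Real.exp (-(2 * t))) / (8 * Dfun t) *
            ‖x - y - ((1 - Real.exp (-t)) / (1 + Real.exp (-t))) • (v + u)‖ ^ 2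
          + (1 + Real.exp (-(2 * t))) / (4 * (1 - Real.exp (-(2 * t)))) *
            ‖(2 * Real.exp (-t) / (1 + Real.exp (-(2 * t)))) • v - u‖ ^ 2
          + (1 - Real.exp (-(2 * t))) / (4 * (1 + Real.exp (-(2 * t)))) * ‖v‖ ^ 2
          + 2 * t))

open Module (finrank)

section HyperbolicFunctions

theorem tanh_strictMono : StrictMono tanh := by
  intro x y hxy
  have hsub : 0 < sinh (y - x) := sinh_pos_iff.2 (sub_pos.2 hxy)
  rw [sinh_sub] at hsub
  rw [tanh_eq_sinh_div_cosh, tanh_eq_sinh_div_cosh, div_lt_div_iff₀ (cosh_pos x) (cosh_pos y)]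
  linarith

theorem tanh_pos {x : ℝ} (hx : 0 < x) : 0 < tanh x := by
  simpa using tanh_strictMono hx

theorem inv_cosh_sq_add_tanh_sq (x : ℝ) : (cosh x)⁻¹ ^ 2 + tanh x ^ 2 = 1 := by
  rw [tanh_eq_sinh_div_cosh]
  field_simp
  linarith [cosh_sq x]

theorem inv_cosh_le_one (x : ℝ) : (cosh x)⁻¹ ≤ 1 :=
  inv_le_one_of_one_le₀ (one_le_cosh x)

theorem tanh_eq_one_sub_exp_div_one_add_exp (x : ℝ) :
    tanh x = (1 - exp (-(2 * x))) / (1 + exp (-(2 * x))) := by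
  have hexp : exp (-(2 * x)) = exp (-x) / exp x := by rw [← exp_sub]; ring_nf
  rw [tanh_eq, hexp]
  field_simp

theorem inv_cosh_eq_two_mul_exp_div (x : ℝ) :
    (cosh x)⁻¹ = 2 * exp (-x) / (1 + exp (-(2 * x))) := by
  have hexp : exp (-(2 * x)) = exp (-x) * exp (-x) := by rw [← exp_add]; ring_nf
  have hinv : exp x * exp (-x) = 1 := by rw [← exp_add]; simp
  rw [cosh_eq, hexp, inv_div, div_eq_div_iff (by positivity) (by positivity)]
  linear_combination -2 * hinv

theorem tanh_half_eq (t : ℝ) : tanh (t / 2) = (1 - exp (-t)) / (1 + exp (-t)) := by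
  rw [tanh_eq_one_sub_exp_div_one_add_exp, mul_div_cancel₀ t two_ne_zero]

theorem two_mul_tanh_half_lt {t : ℝ} (ht : 0 < t) : 2 * tanh (t / 2) < t := by
  have hlog := lt_log_one_add_of_pos (sub_pos.2 (one_lt_exp_iff.2 ht))
  rw [add_sub_cancel, log_exp] at hlog
  have htanh : 2 * tanh (t / 2) = 2 * (exp t - 1) / (exp t - 1 + 2) := by
    have hden : exp t - 1 + 2 ≠ 0 := by linarith [exp_pos t]
    rw [tanh_half_eq, exp_neg]
    field_simp
    ring
  rwa [htanh]

end HyperbolicFunctions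

section Weights

theorem exists_one_add_rpow_le_mul_exp {m ε : ℝ} (hm : 0 ≤ m) (hε : 0 < ε) :
    ∃ K : ℝ, 0 < K ∧ ∀ s : ℝ, 0 ≤ s → (1 + s) ^ m ≤ K * exp (ε * s) := by
  refine ⟨(m / ε) ^ m * exp ε, ?_, fun s hs => ?_⟩
  · rcases hm.eq_or_lt with rfl | hm
    · simpa using exp_pos ε
    · positivity
  · have h := ProbabilityTheory.rpow_abs_le_mul_exp_abs (1 + s) hm hε.ne'
    rwa [abs_of_pos hε, abs_of_nonneg (by positivity : 0 ≤ 1 + s), mul_one_add, exp_add,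
      ← mul_assoc] at h

theorem rpow_le_rpow_abs_mul_rpow {a b c : ℝ} (ha : 0 < a) (hb : 0 < b) (hc : 0 < c)
    (hab : a ≤ c * b) (hba : b ≤ c * a) (s : ℝ) : b ^ s ≤ c ^ |s| * a ^ s := by
  rcases le_total 0 s with hs | hs
  · rw [abs_of_nonneg hs, ← mul_rpow hc.le ha.le]
    exact rpow_le_rpow hb.le hba hs
  · have hdiv : a / c ≤ b := (div_le_iff₀' hc).2 hab
    calc b ^ s ≤ (a / c) ^ s := rpow_le_rpow_of_nonpos (by positivity) hdiv hs
      _ = c ^ |s| * a ^ s := by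
        rw [abs_of_nonpos hs, div_rpow ha.le hc.le, rpow_neg hc.le, div_eq_inv_mul]

variable {E : Type*} [SeminormedAddCommGroup E]

theorem one_add_norm_le_mul (x y : E) : 1 + ‖x‖ ≤ (1 + ‖x - y‖) * (1 + ‖y‖) := by
  have htri : ‖x‖ ≤ ‖x - y‖ + ‖y‖ := by simpa using norm_add_le (x - y) y
  nlinarith [mul_nonneg (norm_nonneg (x - y)) (norm_nonneg y)]

theorem one_add_norm_sq_le_mul (x y : E) :
    1 + ‖x‖ ^ 2 ≤ 2 * (1 + ‖x - y‖ ^ 2) * (1 + ‖y‖ ^ 2) := by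
  have htri : ‖x‖ ≤ ‖x - y‖ + ‖y‖ := by simpa using norm_add_le (x - y) y
  have hsq : ‖x‖ ^ 2 ≤ 2 * (‖x - y‖ ^ 2 + ‖y‖ ^ 2) :=
    (pow_le_pow_left₀ (norm_nonneg x) htri 2).trans add_sq_le
  nlinarith [mul_nonneg (sq_nonneg ‖x - y‖) (sq_nonneg ‖y‖)]

theorem one_add_norm_rpow_le (x y : E) (s : ℝ) :
    (1 + ‖y‖) ^ s ≤ (1 + ‖x - y‖) ^ |s| * (1 + ‖x‖) ^ s :=
  rpow_le_rpow_abs_mul_rpow (by positivity) (by positivity) (by positivity)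
    (one_add_norm_le_mul x y) (norm_sub_rev x y ▸ one_add_norm_le_mul y x) s

theorem one_add_norm_sq_rpow_le (x y : E) (s : ℝ) :
    (1 + ‖y‖ ^ 2) ^ s ≤ (2 * (1 + ‖x - y‖ ^ 2)) ^ |s| * (1 + ‖x‖ ^ 2) ^ s :=
  rpow_le_rpow_abs_mul_rpow (by positivity) (by positivity) (by positivity)
    (one_add_norm_sq_le_mul x y) (norm_sub_rev x y ▸ one_add_norm_sq_le_mul y x) s

end Weights

section Phase

variable {E : Type*} [SeminormedAddCommGroup E] [NormedSpace ℝ E]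

/-- The exponent of the damped kinetic Fokker–Planck kernel without its damping term `2t`, in
hyperbolic form. The transport part is divided by `4t - 8 tanh(t/2) = 8 D(t) / (1 - e^{-2t})`. -/
def kineticPhase (t : ℝ) (x v y u : E) : ℝ :=
  ‖x - y - tanh (t / 2) • (v + u)‖ ^ 2 / (4 * t - 8 * tanh (t / 2))
    + ‖(cosh t)⁻¹ • v - u‖ ^ 2 / (4 * tanh t) + tanh t / 4 * ‖v‖ ^ 2

variable {t : ℝ} (ht : 0 < t) (x v y u : E)
include ht

theorem transport_term_le_kineticPhase :
    ‖x - y - tanh (t / 2) • (v + u)‖ ^ 2 ≤ 4 * t * kineticPhase t x v y u := by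
  have hτ := tanh_pos ht
  have hτ_half := tanh_pos (half_pos ht)
  have hden : 0 < 4 * t - 8 * tanh (t / 2) := by linarith [two_mul_tanh_half_lt ht]
  have hterm : ‖x - y - tanh (t / 2) • (v + u)‖ ^ 2 / (4 * t - 8 * tanh (t / 2))
      ≤ kineticPhase t x v y u := by
    rw [kineticPhase, add_assoc]
    exact le_add_of_nonneg_right (by positivity)
  have hnonneg : 0 ≤ kineticPhase t x v y u := (by positivity : (0 : ℝ) ≤ _).trans hterm
  rw [div_le_iff₀' hden] at hterm
  exact hterm.trans (mul_le_mul_of_nonneg_right (by linarith) hnonneg)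

theorem velocity_terms_le_kineticPhase :
    ‖(cosh t)⁻¹ • v - u‖ ^ 2 / (4 * tanh t) + tanh t / 4 * ‖v‖ ^ 2 ≤ kineticPhase t x v y u := by
  have hden : 0 < 4 * t - 8 * tanh (t / 2) := by linarith [two_mul_tanh_half_lt ht]
  rw [kineticPhase, add_assoc]
  exact le_add_of_nonneg_left (by positivity)

theorem kineticPhase_nonneg : 0 ≤ kineticPhase t x v y u := by
  have hτ := tanh_pos ht
  exact (by positivity : (0 : ℝ) ≤ _).trans (velocity_terms_le_kineticPhase ht x v y u)

theorem tanh_mul_norm_sq_le_kineticPhase :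
    tanh t * ‖v‖ ^ 2 ≤ 4 * kineticPhase t x v y u := by
  have hτ := tanh_pos ht
  have hterms := velocity_terms_le_kineticPhase ht x v y u
  have hfriction : 0 ≤ ‖(cosh t)⁻¹ • v - u‖ ^ 2 / (4 * tanh t) := by positivity
  linarith

theorem norm_sub_velocity_sq_le_kineticPhase :
    ‖v - u‖ ^ 2 ≤ 8 * kineticPhase t x v y u := by
  set a := (cosh t)⁻¹
  set τ := tanh t
  have ha : 0 < a := inv_pos.2 (cosh_pos t)
  have ha_one : a ≤ 1 := inv_cosh_le_one t
  have hτ : 0 < τ := tanh_pos ht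
  have hτ_one : τ < 1 := tanh_lt_one t
  have hdamping : (1 - a) ^ 2 ≤ τ := by
    calc (1 - a) ^ 2 ≤ 1 - a ^ 2 := by nlinarith
      _ = τ ^ 2 := by linarith [inv_cosh_sq_add_tanh_sq t]
      _ ≤ τ := by nlinarith
  have hfriction : ‖a • v - u‖ ^ 2 ≤ 4 * (‖a • v - u‖ ^ 2 / (4 * τ)) := by
    rw [← mul_div_assoc, le_div_iff₀ (by positivity)]
    nlinarith [sq_nonneg ‖a • v - u‖]
  have htri : ‖v - u‖ ≤ (1 - a) * ‖v‖ + ‖a • v - u‖ := by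
    calc ‖v - u‖ = ‖(1 - a) • v + (a • v - u)‖ := by congr 1; module
      _ ≤ (1 - a) * ‖v‖ + ‖a • v - u‖ := by
        refine (norm_add_le _ _).trans_eq ?_
        rw [norm_smul, norm_of_nonneg (sub_nonneg.2 ha_one)]
  calc ‖v - u‖ ^ 2 ≤ ((1 - a) * ‖v‖ + ‖a • v - u‖) ^ 2 := by gcongr
    _ ≤ 2 * (((1 - a) * ‖v‖) ^ 2 + ‖a • v - u‖ ^ 2) := add_sq_le
    _ = 2 * ((1 - a) ^ 2 * ‖v‖ ^ 2 + ‖a • v - u‖ ^ 2) := by rw [mul_pow]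
    _ ≤ 2 * (τ * ‖v‖ ^ 2 + 4 * (‖a • v - u‖ ^ 2 / (4 * τ))) := by gcongr
    _ = 8 * (‖a • v - u‖ ^ 2 / (4 * τ) + τ / 4 * ‖v‖ ^ 2) := by ring
    _ ≤ 8 * kineticPhase t x v y u := by gcongr; exact velocity_terms_le_kineticPhase ht x v y u

theorem norm_tanh_half_smul_add_sq_le_kineticPhase :
    ‖tanh (t / 2) • (v + u)‖ ^ 2 ≤ 48 * kineticPhase t x v y u := by
  set b := tanh (t / 2)
  have hb : 0 < b := tanh_pos (half_pos ht)
  have hb_sq_one : b ^ 2 ≤ 1 := (tanh_sq_lt_one _).le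
  have hb_sq : b ^ 2 ≤ tanh t := by
    have hb_le : b < tanh t := tanh_strictMono (half_lt_self ht)
    nlinarith [tanh_lt_one (t / 2)]
  have htri : ‖v + u‖ ≤ 2 * ‖v‖ + ‖v - u‖ := by
    calc ‖v + u‖ = ‖(2 : ℝ) • v - (v - u)‖ := by congr 1; module
      _ ≤ 2 * ‖v‖ + ‖v - u‖ := by
        refine (norm_sub_le _ _).trans_eq ?_
        rw [norm_smul, norm_ofNat]
  have hfriction := tanh_mul_norm_sq_le_kineticPhase ht x v y u
  have hvelocity := norm_sub_velocity_sq_le_kineticPhase ht x v y u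
  calc ‖b • (v + u)‖ ^ 2 = b ^ 2 * ‖v + u‖ ^ 2 := by
        rw [norm_smul, norm_of_nonneg hb.le, mul_pow]
    _ ≤ b ^ 2 * (2 * ‖v‖ + ‖v - u‖) ^ 2 := by gcongr
    _ ≤ b ^ 2 * (2 * ((2 * ‖v‖) ^ 2 + ‖v - u‖ ^ 2)) := by gcongr; exact add_sq_le
    _ = 8 * (b ^ 2 * ‖v‖ ^ 2) + 2 * (b ^ 2 * ‖v - u‖ ^ 2) := by ring
    _ ≤ 8 * (tanh t * ‖v‖ ^ 2) + 2 * (1 * ‖v - u‖ ^ 2) := by gcongr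
    _ ≤ 48 * kineticPhase t x v y u := by linarith

theorem norm_sub_position_sq_le_kineticPhase :
    ‖x - y‖ ^ 2 ≤ 96 * (1 + t) * kineticPhase t x v y u := by
  set w := x - y - tanh (t / 2) • (v + u)
  have hΦ := kineticPhase_nonneg ht x v y u
  have htransport : ‖w‖ ^ 2 ≤ 4 * t * kineticPhase t x v y u :=
    transport_term_le_kineticPhase ht x v y u
  have hdrift := norm_tanh_half_smul_add_sq_le_kineticPhase ht x v y u
  have htri : ‖x - y‖ ≤ ‖w‖ + ‖tanh (t / 2) • (v + u)‖ := by
    simpa [w] using norm_add_le w (tanh (t / 2) • (v + u))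
  calc ‖x - y‖ ^ 2 ≤ (‖w‖ + ‖tanh (t / 2) • (v + u)‖) ^ 2 := by gcongr
    _ ≤ 2 * (‖w‖ ^ 2 + ‖tanh (t / 2) • (v + u)‖ ^ 2) := add_sq_le
    _ ≤ 96 * (1 + t) * kineticPhase t x v y u := by linarith [mul_nonneg ht.le hΦ]

theorem one_add_norm_sub_velocity_le_kineticPhase :
    1 + ‖v - u‖ ≤ 16 * (1 + kineticPhase t x v y u) := by
  nlinarith [norm_sub_velocity_sq_le_kineticPhase ht x v y u, sq_nonneg (‖v - u‖ - 1)]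

theorem one_add_norm_sub_position_sq_le_kineticPhase :
    1 + ‖x - y‖ ^ 2 ≤ 96 * (1 + t) * (1 + kineticPhase t x v y u) := by
  linarith [norm_sub_position_sq_le_kineticPhase ht x v y u]

omit ht in
theorem exists_weight_le_mul_exp_kineticPhase (r s : ℝ) :
    ∃ K : ℝ, 0 < K ∧ ∀ t : ℝ, 0 < t → ∀ x v y u : E,
      (1 + ‖y‖ ^ 2) ^ r * (1 + ‖u‖) ^ s ≤
        K * exp (t + kineticPhase t x v y u / 2) * ((1 + ‖x‖ ^ 2) ^ r * (1 + ‖v‖) ^ s) := by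
  obtain ⟨K₁, hK₁, htime⟩ := exists_one_add_rpow_le_mul_exp (abs_nonneg r) one_pos
  obtain ⟨K₂, hK₂, hphase⟩ :=
    exists_one_add_rpow_le_mul_exp (add_nonneg (abs_nonneg r) (abs_nonneg s)) one_half_pos
  refine ⟨192 ^ |r| * 16 ^ |s| * K₁ * K₂, by positivity, fun t ht x v y u => ?_⟩
  have hΦ := kineticPhase_nonneg ht x v y u
  have hposition := one_add_norm_sub_position_sq_le_kineticPhase ht x v y u
  have hvelocity := one_add_norm_sub_velocity_le_kineticPhase ht x v y u
  set Φ := kineticPhase t x v y u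
  calc (1 + ‖y‖ ^ 2) ^ r * (1 + ‖u‖) ^ s
      ≤ ((2 * (1 + ‖x - y‖ ^ 2)) ^ |r| * (1 + ‖x‖ ^ 2) ^ r) *
          ((1 + ‖v - u‖) ^ |s| * (1 + ‖v‖) ^ s) := by
        gcongr
        · exact one_add_norm_sq_rpow_le x y r
        · exact one_add_norm_rpow_le v u s
    _ ≤ ((192 * (1 + t) * (1 + Φ)) ^ |r| * (1 + ‖x‖ ^ 2) ^ r) *
          ((16 * (1 + Φ)) ^ |s| * (1 + ‖v‖) ^ s) := by
        have hposition' : 2 * (1 + ‖x - y‖ ^ 2) ≤ 192 * (1 + t) * (1 + Φ) := by linarith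
        gcongr
    _ = 192 ^ |r| * 16 ^ |s| * ((1 + t) ^ |r| * (1 + Φ) ^ (|r| + |s|)) *
          ((1 + ‖x‖ ^ 2) ^ r * (1 + ‖v‖) ^ s) := by
        rw [rpow_add (by positivity), mul_rpow (by positivity) (by positivity),
          mul_rpow (by positivity) (by positivity), mul_rpow (by positivity) (by positivity)]
        ring
    _ ≤ 192 ^ |r| * 16 ^ |s| * ((K₁ * exp (1 * t)) * (K₂ * exp (1 / 2 * Φ))) *
          ((1 + ‖x‖ ^ 2) ^ r * (1 + ‖v‖) ^ s) := by
        gcongr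
        · exact htime t ht.le
        · exact hphase Φ hΦ
    _ = 192 ^ |r| * 16 ^ |s| * K₁ * K₂ * exp (t + Φ / 2) *
          ((1 + ‖x‖ ^ 2) ^ r * (1 + ‖v‖) ^ s) := by
        rw [exp_add, one_mul, one_div_mul_eq_div]
        ring

end Phase

section GaussianIntegrals

open scoped ENNReal

theorem norm_integral_integral_le_of_norm_le_mul {α β G : Type*} [MeasurableSpace α]
    [MeasurableSpace β] [NormedAddCommGroup G] [NormedSpace ℝ G] {μ : Measure α} {ν : Measure β}
    {f : α → β → G} {g : α → β → ℝ} {M I : ℝ} (hM : 0 ≤ M) (hI : 0 ≤ I)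
    (hfg : ∀ a b, ‖f a b‖ ≤ M * g a b)
    (hg : ∫⁻ a, ∫⁻ b, ENNReal.ofReal (g a b) ∂ν ∂μ ≤ ENNReal.ofReal I) :
    ‖∫ a, ∫ b, f a b ∂ν ∂μ‖ ≤ M * I := by
  rw [← ENNReal.ofReal_le_ofReal_iff (mul_nonneg hM hI), ofReal_norm]
  calc ‖∫ a, ∫ b, f a b ∂ν ∂μ‖ₑ ≤ ∫⁻ a, ‖∫ b, f a b ∂ν‖ₑ ∂μ :=
        enorm_integral_le_lintegral_enorm _
    _ ≤ ∫⁻ a, ∫⁻ b, ‖f a b‖ₑ ∂ν ∂μ :=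
        lintegral_mono fun a => enorm_integral_le_lintegral_enorm _
    _ ≤ ∫⁻ a, ∫⁻ b, ENNReal.ofReal M * ENNReal.ofReal (g a b) ∂ν ∂μ := by
        refine lintegral_mono fun a => lintegral_mono fun b => ?_
        rw [← ofReal_norm, ← ENNReal.ofReal_mul hM]
        exact ENNReal.ofReal_le_ofReal (hfg a b)
    _ = ENNReal.ofReal M * ∫⁻ a, ∫⁻ b, ENNReal.ofReal (g a b) ∂ν ∂μ := by
        simp only [lintegral_const_mul' _ _ ENNReal.ofReal_ne_top]
    _ ≤ ENNReal.ofReal (M * I) := by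
        rw [ENNReal.ofReal_mul hM]
        gcongr

variable {V : Type*} [NormedAddCommGroup V] [InnerProductSpace ℝ V] [FiniteDimensional ℝ V]
  [MeasurableSpace V] [BorelSpace V]

theorem lintegral_exp_neg_sq_norm_sub_div {σ : ℝ} (hσ : 0 < σ) (c : V) :
    ∫⁻ y, ENNReal.ofReal (exp (-(‖c - y‖ ^ 2 / σ))) =
      ENNReal.ofReal ((π * σ) ^ (finrank ℝ V / 2 : ℝ)) := by
  have hgauss : ∫ y : V, exp (-(‖y‖ ^ 2 / σ)) = (π * σ) ^ (finrank ℝ V / 2 : ℝ) := by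
    simpa [div_eq_inv_mul, mul_comm π] using
      GaussianFourier.integral_rexp_neg_mul_sq_norm (V := V) (inv_pos.2 hσ)
  have hint : Integrable fun y : V => exp (-(‖y‖ ^ 2 / σ)) :=
    .of_integral_ne_zero (by rw [hgauss]; positivity)
  rw [lintegral_sub_left_eq_self (fun y : V => ENNReal.ofReal (exp (-(‖y‖ ^ 2 / σ)))) c,
    ← ofReal_integral_eq_lintegral_ofReal hint (.of_forall fun y => (exp_pos _).le), hgauss]

theorem lintegral_lintegral_exp_neg_sq_norm_sub_div_mul {α : Type*} [MeasurableSpace α]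
    {μ : Measure α} [SFinite μ] {σ : ℝ} (hσ : 0 < σ) {φ : α → V} (hφ : Measurable φ)
    {ψ : α → ℝ≥0∞} (hψ : Measurable ψ) :
    ∫⁻ y, ∫⁻ a, ENNReal.ofReal (exp (-(‖φ a - y‖ ^ 2 / σ))) * ψ a ∂μ =
      ENNReal.ofReal ((π * σ) ^ (finrank ℝ V / 2 : ℝ)) * ∫⁻ a, ψ a ∂μ := by
  rw [lintegral_lintegral_swap (by fun_prop), ← lintegral_const_mul _ hψ]
  refine lintegral_congr fun a => ?_
  rw [lintegral_mul_const _ (by fun_prop), lintegral_exp_neg_sq_norm_sub_div hσ]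

theorem lintegral_exp_neg_half_kineticPhase_le {t : ℝ} (ht : 0 < t) (x v : V) :
    ∫⁻ y, ∫⁻ u, ENNReal.ofReal (exp (-(kineticPhase t x v y u / 2))) ≤
      ENNReal.ofReal ((64 * π ^ 2 * (t - 2 * tanh (t / 2)) * tanh t) ^
        (finrank ℝ V / 2 : ℝ)) := by
  have hτ := tanh_pos ht
  have hgap : 0 < t - 2 * tanh (t / 2) := by linarith [two_mul_tanh_half_lt ht]
  set σ := 8 * (t - 2 * tanh (t / 2)) with hσ_def
  have hσ : 0 < σ := by positivity
  have hpointwise (y u : V) : exp (-(kineticPhase t x v y u / 2)) ≤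
      exp (-(‖x - tanh (t / 2) • (v + u) - y‖ ^ 2 / σ)) *
        exp (-(‖(cosh t)⁻¹ • v - u‖ ^ 2 / (8 * tanh t))) := by
    have hfriction : 0 ≤ tanh t / 8 * ‖v‖ ^ 2 := by positivity
    have hphase : kineticPhase t x v y u / 2 = ‖x - tanh (t / 2) • (v + u) - y‖ ^ 2 / σ +
        ‖(cosh t)⁻¹ • v - u‖ ^ 2 / (8 * tanh t) + tanh t / 8 * ‖v‖ ^ 2 := by
      have hden : 4 * t - 8 * tanh (t / 2) = σ / 2 := by rw [hσ_def]; ring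
      rw [kineticPhase, hden, sub_right_comm x y]
      field_simp
      ring
    rw [← exp_add, exp_le_exp, hphase]
    linarith
  calc ∫⁻ y, ∫⁻ u, ENNReal.ofReal (exp (-(kineticPhase t x v y u / 2)))
      ≤ ∫⁻ y, ∫⁻ u, ENNReal.ofReal (exp (-(‖x - tanh (t / 2) • (v + u) - y‖ ^ 2 / σ))) *
          ENNReal.ofReal (exp (-(‖(cosh t)⁻¹ • v - u‖ ^ 2 / (8 * tanh t)))) := by
        refine lintegral_mono fun y => lintegral_mono fun u => ?_
        rw [← ENNReal.ofReal_mul (exp_pos _).le]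
        exact ENNReal.ofReal_le_ofReal (hpointwise y u)
    _ = ENNReal.ofReal ((π * σ) ^ (finrank ℝ V / 2 : ℝ)) *
          ENNReal.ofReal ((π * (8 * tanh t)) ^ (finrank ℝ V / 2 : ℝ)) := by
        rw [lintegral_lintegral_exp_neg_sq_norm_sub_div_mul hσ (by fun_prop) (by fun_prop),
          lintegral_exp_neg_sq_norm_sub_div (by positivity)]
    _ = ENNReal.ofReal ((64 * π ^ 2 * (t - 2 * tanh (t / 2)) * tanh t) ^
          (finrank ℝ V / 2 : ℝ)) := by
        rw [← ENNReal.ofReal_mul (by positivity), ← mul_rpow (by positivity) (by positivity),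
          hσ_def]
        ring_nf

end GaussianIntegrals

section Kernel

theorem Dfun_eq (t : ℝ) : Dfun t = (1 - exp (-(2 * t))) * (t - 2 * tanh (t / 2)) / 2 := by
  have hexp : exp (-(2 * t)) = exp (-t) ^ 2 := by rw [← exp_nat_mul]; ring_nf
  rw [Dfun, tanh_half_eq, hexp]
  field_simp
  ring

theorem Dfun_pos {t : ℝ} (ht : 0 < t) : 0 < Dfun t := by
  have hexp : exp (-(2 * t)) < 1 := exp_lt_one_iff.2 (by linarith)
  rw [Dfun_eq]
  exact half_pos (mul_pos (sub_pos.2 hexp) (sub_pos.2 (two_mul_tanh_half_lt ht)))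

theorem pi_div_sqrt_Dfun_pow_mul_le {t : ℝ} (ht : 0 < t) (d : ℕ) :
    (π / √(Dfun t)) ^ d * (64 * π ^ 2 * (t - 2 * tanh (t / 2)) * tanh t) ^ (d / 2 : ℝ) ≤
      (128 * π ^ 4) ^ (d / 2 : ℝ) := by
  have hD := Dfun_pos ht
  have hτ := tanh_pos ht
  have hgap : 0 < t - 2 * tanh (t / 2) := sub_pos.2 (two_mul_tanh_half_lt ht)
  have hexp : exp (-(2 * t)) < 1 := exp_lt_one_iff.2 (by linarith)
  have hsqrt : (π / √(Dfun t)) ^ d = (π ^ 2 / Dfun t) ^ (d / 2 : ℝ) := by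
    rw [← sqrt_sq pi_pos.le, ← sqrt_div (sq_nonneg π), sqrt_eq_rpow, ← rpow_natCast,
      ← rpow_mul (by positivity), sqrt_sq pi_pos.le, one_div_mul_eq_div]
  rw [hsqrt, ← mul_rpow (by positivity) (by positivity)]
  refine rpow_le_rpow (by positivity) ?_ (by positivity)
  calc π ^ 2 / Dfun t * (64 * π ^ 2 * (t - 2 * tanh (t / 2)) * tanh t)
      = 128 * π ^ 4 / (1 + exp (-(2 * t))) := by
        have hexp_ne : 1 - exp (-(2 * t)) ≠ 0 := (sub_pos.2 hexp).ne'
        rw [Dfun_eq, tanh_eq_one_sub_exp_div_one_add_exp t]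
        field_simp
        ring
    _ ≤ 128 * π ^ 4 := div_le_self (by positivity) (by linarith [exp_pos (-(2 * t))])

variable {V : Type*} [NormedAddCommGroup V] [InnerProductSpace ℝ V]

/-- The Green's function of the damped kinetic Fokker–Planck equation on a Euclidean space `V` of
arbitrary dimension `d`. Compared with `G1ker`, the dimension enters only through the
normalisation `(2π)^{-2d} (π / √D(t))^d`. -/
def dampedKineticKernel (t : ℝ) (x v y u : V) : ℝ :=
  (2 * π) ^ (-(2 * finrank ℝ V) : ℝ) * (π / √(Dfun t)) ^ finrank ℝ V *
    exp (-(kineticPhase t x v y u + 2 * t))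

theorem G1ker_eq_dampedKineticKernel {t : ℝ} (ht : t ≠ 0) (x v y u : E3) :
    G1ker t x v y u = dampedKineticKernel t x v y u := by
  have hexp : 1 - exp (-(2 * t)) ≠ 0 := by
    rw [sub_ne_zero, ne_comm, Ne, exp_eq_one_iff]
    simpa using ht
  have htransport :
      (1 - exp (-(2 * t))) / (8 * Dfun t) = (4 * t - 8 * tanh (t / 2))⁻¹ := by
    have hden : 8 * Dfun t = (1 - exp (-(2 * t))) * (4 * t - 8 * tanh (t / 2)) := by
      rw [Dfun_eq]
      ring
    rw [hden, div_mul_cancel_left₀ hexp]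
  have hvelocity :
      (1 + exp (-(2 * t))) / (4 * (1 - exp (-(2 * t)))) = (4 * tanh t)⁻¹ := by
    rw [tanh_eq_one_sub_exp_div_one_add_exp, ← mul_div_assoc, inv_div]
  have hfriction : (1 - exp (-(2 * t))) / (4 * (1 + exp (-(2 * t)))) = tanh t / 4 := by
    rw [tanh_eq_one_sub_exp_div_one_add_exp, div_div, mul_comm 4]
  have hdim : (-(2 * finrank ℝ E3) : ℝ) = -6 := by
    rw [finrank_euclideanSpace_fin]; norm_num
  rw [G1ker, dampedKineticKernel, kineticPhase, htransport, hvelocity, hfriction, hdim,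
    finrank_euclideanSpace_fin, ← tanh_half_eq, ← inv_cosh_eq_two_mul_exp_div,
    inv_mul_eq_div, inv_mul_eq_div]

theorem dampedKineticKernel_nonneg (t : ℝ) (x v y u : V) :
    0 ≤ dampedKineticKernel t x v y u := by
  rw [dampedKineticKernel]
  positivity

theorem exists_dampedKineticKernel_mul_weight_le (r s : ℝ) :
    ∃ K : ℝ, 0 < K ∧ ∀ t : ℝ, 0 < t → ∀ x v y u : V,
      dampedKineticKernel t x v y u * ((1 + ‖y‖ ^ 2) ^ r * (1 + ‖u‖) ^ s) ≤
        K * exp (-t) * ((1 + ‖x‖ ^ 2) ^ r * (1 + ‖v‖) ^ s) *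
          ((π / √(Dfun t)) ^ finrank ℝ V * exp (-(kineticPhase t x v y u / 2))) := by
  obtain ⟨K, hK, hweight⟩ := exists_weight_le_mul_exp_kineticPhase (E := V) r s
  refine ⟨(2 * π) ^ (-(2 * finrank ℝ V) : ℝ) * K, by positivity, fun t ht x v y u => ?_⟩
  have hkernel := dampedKineticKernel_nonneg t x v y u
  have hexp : exp (-(kineticPhase t x v y u + 2 * t)) * exp (t + kineticPhase t x v y u / 2) =
      exp (-t) * exp (-(kineticPhase t x v y u / 2)) := by
    rw [← exp_add, ← exp_add]
    ring_nf
  calc dampedKineticKernel t x v y u * ((1 + ‖y‖ ^ 2) ^ r * (1 + ‖u‖) ^ s)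
      ≤ dampedKineticKernel t x v y u *
          (K * exp (t + kineticPhase t x v y u / 2) *
            ((1 + ‖x‖ ^ 2) ^ r * (1 + ‖v‖) ^ s)) :=
        mul_le_mul_of_nonneg_left (hweight t ht x v y u) hkernel
    _ = _ := by
        rw [dampedKineticKernel]
        linear_combination (2 * π) ^ (-(2 * finrank ℝ V) : ℝ) *
          (π / √(Dfun t)) ^ finrank ℝ V * K * ((1 + ‖x‖ ^ 2) ^ r * (1 + ‖v‖) ^ s) * hexp

variable [FiniteDimensional ℝ V] [MeasurableSpace V] [BorelSpace V]

theorem lintegral_pi_div_sqrt_Dfun_pow_mul_exp_neg_half_kineticPhase_le {t : ℝ} (ht : 0 < t)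
    (x v : V) :
    ∫⁻ y, ∫⁻ u, ENNReal.ofReal
        ((π / √(Dfun t)) ^ finrank ℝ V * exp (-(kineticPhase t x v y u / 2))) ≤
      ENNReal.ofReal ((128 * π ^ 4) ^ (finrank ℝ V / 2 : ℝ)) := by
  have hnorm : 0 ≤ (π / √(Dfun t)) ^ finrank ℝ V := by positivity
  simp only [ENNReal.ofReal_mul hnorm, lintegral_const_mul' _ _ ENNReal.ofReal_ne_top]
  refine (mul_le_mul_right (lintegral_exp_neg_half_kineticPhase_le ht x v) _).trans ?_
  rw [← ENNReal.ofReal_mul hnorm]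
  exact ENNReal.ofReal_le_ofReal (pi_div_sqrt_Dfun_pow_mul_le ht _)

theorem G1_convolution_decay_general (r s : ℝ) :
    ∃ C : ℝ, 0 < C ∧ ∀ g₀ : V → V → ℝ,
      (∀ y u, |g₀ y u| ≤ (1 + ‖y‖ ^ 2) ^ r * (1 + ‖u‖) ^ s) →
      ∀ t : ℝ, 0 < t → ∀ x v : V,
        |∫ y, ∫ u, dampedKineticKernel t x v y u * g₀ y u| ≤
          C * exp (-t) * (1 + ‖x‖ ^ 2) ^ r * (1 + ‖v‖) ^ s := by
  obtain ⟨K, hK, hkernel⟩ := exists_dampedKineticKernel_mul_weight_le (V := V) r s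
  refine ⟨K * (128 * π ^ 4) ^ (finrank ℝ V / 2 : ℝ), by positivity, fun g₀ hg t ht x v => ?_⟩
  have hpointwise (y u : V) : ‖dampedKineticKernel t x v y u * g₀ y u‖ ≤
      K * exp (-t) * ((1 + ‖x‖ ^ 2) ^ r * (1 + ‖v‖) ^ s) *
        ((π / √(Dfun t)) ^ finrank ℝ V * exp (-(kineticPhase t x v y u / 2))) := by
    rw [norm_mul, norm_of_nonneg (dampedKineticKernel_nonneg t x v y u)]
    exact (mul_le_mul_of_nonneg_left (hg y u) (dampedKineticKernel_nonneg t x v y u)).trans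
      (hkernel t ht x v y u)
  refine (norm_integral_integral_le_of_norm_le_mul (by positivity) (by positivity) hpointwise
    (lintegral_pi_div_sqrt_Dfun_pow_mul_exp_neg_half_kineticPhase_le ht x v)).trans_eq ?_
  ring

end Kernel

/-- Pointwise space–velocity decay of `G₁(t) * g₀` (Lemma 4.1, estimate (4.1)). -/
theorem G1_convolution_decay (n γ : ℝ) (hn : 0 ≤ n) (hγ : 0 ≤ γ) :
    ∃ C : ℝ, 0 < C ∧ ∀ g₀ : E3 → E3 → ℝ,
      (∀ y u, |g₀ y u| ≤ (1 + ‖y‖ ^ 2) ^ (-n) * (1 + ‖u‖) ^ (-γ)) →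
      ∀ t : ℝ, 0 < t → ∀ x v : E3,
        |∫ y : E3, ∫ u : E3, G1ker t x v y u * g₀ y u| ≤
          C * Real.exp (-t) * (1 + ‖x‖ ^ 2) ^ (-n) * (1 + ‖v‖) ^ (-γ) := by
  obtain ⟨C, hC, hbound⟩ := G1_convolution_decay_general (V := E3) (-n) (-γ)
  exact ⟨C, hC, fun g₀ hg t ht x v => by
    simpa only [G1ker_eq_dampedKineticKernel ht.ne'] using hbound g₀ hg t ht x v⟩

end
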